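/- For every convex body K in ℝ^d, the Hadwiger number H(K) (the maximum number of non-overlapping translates of K all touching K) satisfies H(K) ≤ 3^d − 1, with equality if and only if K is an affine image of the d-cube. -/

import Mathlib

open scoped Classical Pointwise

noncomputable section

/-- `K` admits `m` non-overlapping translates all touching `K`: there are translates
`c₁+K, …, c_m+K`, pairwise non-overlapping, each non-overlapping with `K` and meeting
`K`. -/
def HasHadwigerConfig {d : ℕ} (K : Set (EuclideanSpace ℝ (Fin d))) (m : ℕ) : Prop :=
  ∃ c : Fin m → EuclideanSpace ℝ (Fin d),
    (∀ i, Disjoint (interior (c i +ᵥ K)) (interior K) ∧ ((c i +ᵥ K) ∩ K).Nonempty) ∧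
    ∀ i j, i ≠ j → Disjoint (interior (c i +ᵥ K)) (interior (c j +ᵥ K))

/-- `K` is an affine image of the `d`-cube. -/
def IsAffineCube {d : ℕ} (K : Set (EuclideanSpace ℝ (Fin d))) : Prop :=
  ∃ f : EuclideanSpace ℝ (Fin d) ≃ᵃ[ℝ] EuclideanSpace ℝ (Fin d),
    K = f '' {x | ∀ i, x i ∈ Set.Icc (0 : ℝ) 1}

/-! Translates of `K` fail to overlap, or meet, according to whether their centres are at distance
at least, or at most, one in the norm with unit ball `K - K`. So a Hadwiger configuration together
with the origin is a set `S` of points of the unit ball at mutual distances at least one. The balls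
of radius `1 / 2` about `S` are disjoint and lie in the ball of radius `3 / 2`, and so
`|S| ≤ 3 ^ d`.

In the case of equality these balls dissect `3 • D`, where `D` is the ball of radius `1 / 2`. The
tile containing the triple of a point of a face `F` of `D` is centred at the double of a point of
`F`, so twice each extreme point of `D` is a centre, `D` is a polytope, and each tripled edge is cut
into three. It follows that edges have length one, and that `D` contains, near any edge, a prism
over it. Therefore the edges at a vertex are linearly independent, and `D` is the parallelepiped
they span. A convex body whose difference body is a parallelepiped is itself one. Conversely, for a
parallelepiped the `3 ^ d` points with coordinates `-1`, `0` or `1` form such a set `S`. -/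

open Module Metric MeasureTheory

section Packing

/-- A finite set of points of `p`-norm at most one, at mutual `p`-distance at least one. When `p` is
the gauge of a body `C`, these are the centres of non-overlapping translates of `C / 2` that touch
or overlap `C / 2`. -/
structure IsUnitPacking {V : Type*} [Sub V] (p : V → ℝ) (S : Finset V) : Prop where
  le_one : ∀ s ∈ S, p s ≤ 1
  one_le_sub : (S : Set V).Pairwise fun s t ↦ 1 ≤ p (s - t)

/-- The closed ball of radius `1 / 2`, whose translates by a unit packing do not overlap. -/
abbrev halfBall (E : Type*) [NormedAddCommGroup E] : Set E := closedBall 0 (1 / 2)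

theorem norm_sub_le_one_of_mem_halfBall {E : Type*} [NormedAddCommGroup E]
    {x y : E} (hx : x ∈ halfBall E) (hy : y ∈ halfBall E) :
    ‖x - y‖ ≤ 1 := by
  rw [mem_closedBall_zero_iff] at hx hy
  linarith [norm_sub_le x y]

variable {E : Type*} [NormedAddCommGroup E]

/-- A unit packing whose translates of the half ball dissect the tripled half ball. -/
structure IsTightPacking [NormedSpace ℝ E] (S : Finset E) : Prop
    extends IsUnitPacking (norm : E → ℝ) S where
  exists_sub_mem : ∀ x ∈ halfBall E, ∃ s ∈ S, (3 : ℝ) • x - s ∈ halfBall E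

theorem IsUnitPacking.pairwiseDisjoint_ball {S : Finset E}
    (hS : IsUnitPacking (norm : E → ℝ) S) :
    (S : Set E).PairwiseDisjoint fun s ↦ ball s (1 / 2) := fun s hs t ht hst ↦
  ball_disjoint_ball (by rw [dist_eq_norm]; linarith [hS.one_le_sub hs ht hst])

theorem IsUnitPacking.ball_subset_ball {S : Finset E} (hS : IsUnitPacking (norm : E → ℝ) S)
    {s : E} (hs : s ∈ S) : ball s (1 / 2) ⊆ ball 0 (3 / 2) :=
  Metric.ball_subset_ball' (by rw [dist_zero_right]; linarith [hS.le_one s hs])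

variable [NormedSpace ℝ E] [FiniteDimensional ℝ E] [MeasurableSpace E] [BorelSpace E]

theorem IsUnitPacking.card_mul_addHaar_add_le {S : Finset E}
    (hS : IsUnitPacking (norm : E → ℝ) S) (μ : Measure E) [μ.IsAddHaarMeasure] {U : Set E}
    (hU : IsOpen U) (hU_sub : U ⊆ ball 0 (3 / 2)) (hU_disj : ∀ s ∈ S, Disjoint (ball s (1 / 2)) U) :
    S.card * μ (ball 0 (1 / 2)) + μ U ≤ 3 ^ finrank ℝ E * μ (ball 0 (1 / 2)) :=
  calc
    S.card * μ (ball 0 (1 / 2)) + μ U = μ (⋃ s ∈ S, ball s (1 / 2)) + μ U := by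
      rw [measure_biUnion_finset hS.pairwiseDisjoint_ball fun _ _ ↦ measurableSet_ball]
      simp only [μ.addHaar_ball_center, Finset.sum_const, nsmul_eq_mul]
    _ = μ ((⋃ s ∈ S, ball s (1 / 2)) ∪ U) :=
      (measure_union (Set.disjoint_iUnion₂_left.2 hU_disj) hU.measurableSet).symm
    _ ≤ μ (ball 0 (3 / 2)) :=
      measure_mono (Set.union_subset (Set.iUnion₂_subset fun _ ↦ hS.ball_subset_ball) hU_sub)
    _ = 3 ^ finrank ℝ E * μ (ball 0 (1 / 2)) := by
      rw [show (3 / 2 : ℝ) = 3 * (1 / 2) by norm_num, μ.addHaar_ball_mul_of_pos 0 three_pos,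
        ENNReal.ofReal_pow zero_le_three, ENNReal.ofReal_ofNat]

end Packing

section Volume

variable {E : Type*} [NormedAddCommGroup E] [NormedSpace ℝ E] [FiniteDimensional ℝ E] {S : Finset E}

theorem IsUnitPacking.card_le (hS : IsUnitPacking (norm : E → ℝ) S) :
    S.card ≤ 3 ^ finrank ℝ E := by
  borelize E
  have hvol := hS.card_mul_addHaar_add_le Measure.addHaar isOpen_empty (Set.empty_subset _)
    fun _ _ ↦ Set.disjoint_empty _
  rw [measure_empty, add_zero, ENNReal.mul_le_mul_iff_left (measure_ball_pos _ _ one_half_pos).ne'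
    measure_ball_lt_top.ne] at hvol
  exact_mod_cast hvol

theorem IsUnitPacking.isTightPacking (hS : IsUnitPacking (norm : E → ℝ) S)
    (hcard : S.card = 3 ^ finrank ℝ E) : IsTightPacking S := by
  borelize E
  set C : Set E := ⋃ s ∈ S, closedBall s (1 / 2)
  have hC : IsClosed C := S.finite_toSet.isClosed_biUnion fun _ _ ↦ isClosed_closedBall
  have hvol := hS.card_mul_addHaar_add_le Measure.addHaar (isOpen_ball.sdiff hC) Set.sdiff_subset
    fun s hs ↦ Set.disjoint_sdiff_right.mono_left <| ball_subset_closedBall.trans <|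
      Set.subset_biUnion_of_mem (u := fun s ↦ closedBall s (1 / 2)) hs
  rw [hcard, Nat.cast_pow, Nat.cast_ofNat] at hvol
  have hfin : 3 ^ finrank ℝ E * Measure.addHaar (ball (0 : E) (1 / 2)) ≠ ⊤ :=
    ENNReal.mul_ne_top (ENNReal.pow_ne_top ENNReal.ofNat_ne_top) measure_ball_lt_top.ne
  have hnull : Measure.addHaar (ball (0 : E) (3 / 2) \ C) = 0 := by
    rwa [← nonpos_iff_eq_zero, ← ENNReal.add_le_add_iff_left hfin, add_zero]
  have hcover : closedBall (0 : E) (3 / 2) ⊆ C := by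
    rw [← closure_ball _ (by norm_num), hC.closure_subset_iff, ← Set.sdiff_eq_empty]
    exact (isOpen_ball.sdiff hC).eq_empty_of_measure_zero hnull
  refine ⟨hS, fun x hx ↦ ?_⟩
  have hx3 : (3 : ℝ) • x ∈ closedBall (0 : E) (3 / 2) := by
    rw [mem_closedBall_zero_iff, norm_smul, Real.norm_ofNat]
    linarith [mem_closedBall_zero_iff.1 hx]
  simpa only [C, halfBall, Set.mem_iUnion₂, mem_closedBall_iff_norm, sub_zero, exists_prop] using
    hcover hx3

end Volume

section ConvexGeometry

theorem exists_subset_span_eq_and_notMem_span_sdiff {R M : Type*} [Semiring R] [AddCommMonoid M]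
    [Module R M] {s : Set M} (hs : s.Finite) :
    ∃ t ⊆ s, Submodule.span R t = Submodule.span R s ∧ ∀ v ∈ t, v ∉ Submodule.span R (t \ {v}) := by
  have hfin : {t | t ⊆ s ∧ Submodule.span R t = Submodule.span R s}.Finite :=
    hs.finite_subsets.subset fun _ ht ↦ ht.1
  obtain ⟨t, ⟨hts, hspan⟩, hmin⟩ := hfin.exists_minimal ⟨s, subset_rfl, rfl⟩
  refine ⟨t, hts, hspan, fun v hv hv_span ↦ ?_⟩
  have hdrop : Submodule.span R (t \ {v}) = Submodule.span R s := by
    rw [← hspan, ← Submodule.span_insert_eq_span hv_span, Set.insert_sdiff_self_of_mem hv]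
  exact (hmin ⟨Set.sdiff_subset.trans hts, hdrop⟩ Set.sdiff_subset hv).2 rfl

variable {V : Type*} [AddCommGroup V] [Module ℝ V] {P : Set V} {e : V}

theorem exists_mem_hull_sub_eq_of_mem_span {s : Set V} {v : V} (hv : v ∈ Submodule.span ℝ s) :
    ∃ p ∈ PointedCone.hull ℝ s, ∃ q ∈ PointedCone.hull ℝ s, p - q = v := by
  induction hv using Submodule.span_induction with
  | mem v hv => exact ⟨v, PointedCone.subset_hull hv, 0, zero_mem _, sub_zero v⟩
  | zero => exact ⟨0, zero_mem _, 0, zero_mem _, sub_zero 0⟩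
  | add _ _ _ _ ih₁ ih₂ =>
    obtain ⟨p₁, hp₁, q₁, hq₁, rfl⟩ := ih₁
    obtain ⟨p₂, hp₂, q₂, hq₂, rfl⟩ := ih₂
    exact ⟨p₁ + p₂, add_mem hp₁ hp₂, q₁ + q₂, add_mem hq₁ hq₂, add_sub_add_comm _ _ _ _⟩
  | smul c _ _ ih =>
    obtain ⟨p, hp, q, hq, rfl⟩ := ih
    rcases le_total 0 c with hc | hc
    · exact ⟨c • p, PointedCone.smul_mem _ hc hp, c • q, PointedCone.smul_mem _ hc hq,
        (smul_sub c p q).symm⟩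
    · exact ⟨-c • q, PointedCone.smul_mem _ (neg_nonneg.2 hc) hq, -c • p,
        PointedCone.smul_mem _ (neg_nonneg.2 hc) hp, by module⟩

theorem repr_nonneg_of_mem_hull_range {ι : Type*} (b : Basis ι ℝ V) {x : V}
    (hx : x ∈ PointedCone.hull ℝ (Set.range b)) (i : ι) : 0 ≤ b.repr x i := by
  have hle : PointedCone.hull ℝ (Set.range b) ≤ (PointedCone.positive ℝ ℝ).comap (b.coord i) := by
    refine Submodule.span_le.2 ?_
    rintro _ ⟨j, rfl⟩
    simp [Finsupp.single_apply, apply_ite]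
  simpa using hle hx

theorem exists_smul_add_eq_of_mem_hull {s : Set V} {v x : V} (hv : v ∈ s)
    (hx : x ∈ PointedCone.hull ℝ s) :
    ∃ k ≥ (0 : ℝ), ∃ z ∈ PointedCone.hull ℝ (s \ {v}), k • v + z = x := by
  rw [← Set.insert_sdiff_self_of_mem hv] at hx
  obtain ⟨k, z, hz, rfl⟩ := Submodule.mem_span_insert.1 hx
  exact ⟨k, k.2, z, hz, rfl⟩

theorem add_smul_mem_of_le (hP : Convex ℝ P) {v : V} {r t : ℝ} (he : e ∈ P) (hr : e + r • v ∈ P)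
    (ht : 0 ≤ t) (htr : t ≤ r) : e + t • v ∈ P := by
  rcases htr.eq_or_lt with rfl | hlt
  · exact hr
  · simpa [smul_smul, div_mul_cancel₀ t (ht.trans_lt hlt).ne'] using
      hP.add_smul_mem he hr ⟨div_nonneg ht (ht.trans htr), div_le_one_of_le₀ htr (ht.trans htr)⟩

theorem third_smul_two_smul_add_add_smul_mem (hP : Convex ℝ P) {u q : V} {a t : ℝ}
    (he : e ∈ P) (heu : e + u ∈ P) (hq : q + a • u ∈ P) (ht : t - a ∈ Set.Icc (0 : ℝ) 2) :
    (1 / 3 : ℝ) • ((2 : ℝ) • e + q + t • u) ∈ P := by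
  have he_mem : e + ((t - a) / 2) • u ∈ P :=
    hP.add_smul_mem he heu ⟨by linarith [ht.1], by linarith [ht.2]⟩
  convert! hP he_mem hq (a := 2 / 3) (b := 1 / 3) (by norm_num) (by norm_num)
    (by norm_num) using 1
  module

theorem exists_pos_add_smul_mem_of_mem_hull (hP : Convex ℝ P) (he : e ∈ P) {s : Set V}
    (hs : ∀ w ∈ s, ∃ r > (0 : ℝ), e + r • w ∈ P) {g : V} (hg : g ∈ PointedCone.hull ℝ s) :
    ∃ r > (0 : ℝ), e + r • g ∈ P := by
  induction hg using Submodule.span_induction with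
  | mem w hw => exact hs w hw
  | zero => exact ⟨1, one_pos, by rwa [smul_zero, add_zero]⟩
  | add g h _ _ ihg ihh =>
    obtain ⟨r, hr, hg⟩ := ihg
    obtain ⟨t, ht, hh⟩ := ihh
    refine ⟨r * t / (r + t), by positivity, ?_⟩
    have hcomb := hP hg hh (a := t / (r + t)) (b := r / (r + t)) (by positivity) (by positivity)
      (by rw [← add_div, add_comm, div_self (by positivity)])
    convert! hcomb using 1
    match_scalars <;> field_simp
    ring
  | smul c g _ ih =>
    obtain ⟨r, hr, hg⟩ := ih
    have hc : (0 : ℝ) ≤ c := c.2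
    refine ⟨r / (c + 1), by positivity, ?_⟩
    change e + (r / (c + 1) : ℝ) • (c : ℝ) • g ∈ P
    rw [smul_smul, div_mul_comm]
    exact add_smul_mem_of_le hP he hg (by positivity)
      (mul_le_of_le_one_left hr.le (div_le_one_of_le₀ (by linarith) (by positivity)))

theorem eq_zero_of_mem_extremePoints (he : e ∈ P.extremePoints ℝ) {g : V} {r t : ℝ} (hr : 0 < r)
    (ht : 0 < t) (hrg : e + r • g ∈ P) (htg : e + t • -g ∈ P) : g = 0 := by
  have hmem : e ∈ openSegment ℝ (e + r • g) (e + t • -g) :=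
    ⟨t / (r + t), r / (r + t), by positivity, by positivity, by field_simp; ring, by
      match_scalars <;> field_simp <;> ring⟩
  have := he.2 hrg htg hmem
  simpa [hr.ne'] using this

theorem add_smul_mem_segment_of_mem_extremePoints {v : V} {k : ℝ} (he : e ∈ P) (hv : v ≠ 0)
    (hev : e + v ∈ P.extremePoints ℝ) (hk : 0 ≤ k) (hkv : e + k • v ∈ P) :
    e + k • v ∈ segment ℝ e (e + v) := by
  rw [segment_eq_image']
  refine ⟨k, ⟨hk, ?_⟩, by rw [add_sub_cancel_left]⟩
  by_contra! hk1
  have hmem : e + v ∈ openSegment ℝ (e + k • v) e :=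
    ⟨k⁻¹, 1 - k⁻¹, by positivity, by linarith [inv_lt_one_of_one_lt₀ hk1], by ring, by
      match_scalars <;> field_simp; ring⟩
  have hsmul : (k - 1) • v = 0 := by linear_combination (norm := module) (1 : ℝ) • hev.2 hkv he hmem
  rcases smul_eq_zero.1 hsmul with h | h
  · linarith
  · exact hv h

theorem isExtreme_segment_of_notMem_hull (hP : Convex ℝ P) (he : e ∈ P) {N : Set V}
    (hN : ∀ x ∈ P, x - e ∈ PointedCone.hull ℝ N)
    (hsalient : ∀ g ∈ PointedCone.hull ℝ N, -g ∈ PointedCone.hull ℝ N → g = 0) {v : V} (hv : v ∈ N)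
    (hv_hull : v ∉ PointedCone.hull ℝ (N \ {v})) (hev : e + v ∈ P.extremePoints ℝ) :
    IsExtreme ℝ P (segment ℝ e (e + v)) := by
  have hdecomp (x : V) (hx : x ∈ P) :
      ∃ k ≥ (0 : ℝ), ∃ z ∈ PointedCone.hull ℝ (N \ {v}), x = e + k • v + z := by
    obtain ⟨k, hk, z, hz, hxk⟩ := exists_smul_add_eq_of_mem_hull hv (hN x hx)
    exact ⟨k, hk, z, hz, by rw [add_assoc, hxk, add_sub_cancel]⟩
  have hmono := Submodule.span_mono (R := {c : ℝ // 0 ≤ c}) (Set.sdiff_subset (s := N) (t := {v}))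
  refine ⟨hP.segment_subset he hev.1, fun x hx y hy z hz hzxy ↦ ?_⟩
  rw [segment_eq_image'] at hz
  obtain ⟨t, -, rfl⟩ := hz
  obtain ⟨a, b, ha, hb, hab, hxy⟩ := hzxy
  obtain ⟨k, hk, p, hp, rfl⟩ := hdecomp x hx
  obtain ⟨l, -, q, hq, rfl⟩ := hdecomp y hy
  obtain rfl : b = 1 - a := by linarith
  have hap := PointedCone.smul_mem _ ha.le hp
  have hbq := PointedCone.smul_mem _ hb.le hq
  have hsum : a • p + (1 - a) • q = (t - (a * k + (1 - a) * l)) • v := by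
    linear_combination (norm := module) (1 : ℝ) • hxy
  have hle : t - (a * k + (1 - a) * l) ≤ 0 := by
    by_contra! hpos
    refine hv_hull ((PointedCone.smul_mem_iff _ hpos).1 ?_)
    exact hsum ▸ add_mem hap hbq
  have hap0 : a • p = 0 := by
    refine hsalient _ (hmono hap) ?_
    rw [show -(a • p) = (1 - a) • q + (-(t - (a * k + (1 - a) * l))) • v by
      linear_combination (norm := module) (-1 : ℝ) • hsum]
    exact add_mem (hmono hbq)
      (PointedCone.smul_mem _ (neg_nonneg.2 hle) (PointedCone.subset_hull hv))
  obtain rfl : p = 0 := (smul_eq_zero.1 hap0).resolve_left ha.ne'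
  rw [add_zero] at hx ⊢
  exact add_smul_mem_segment_of_mem_extremePoints he
    (fun h0 ↦ hv_hull (h0 ▸ zero_mem _)) hev hk hx

theorem add_smul_mem_segment_iff {w : V} (hw : w ≠ 0) {t : ℝ} :
    e + t • w ∈ segment ℝ e (e + w) ↔ t ∈ Set.Icc (0 : ℝ) 1 := by
  rw [segment_eq_image', add_sub_cancel_left]
  refine ⟨?_, fun ht ↦ ⟨t, ht, rfl⟩⟩
  rintro ⟨s, hs, hst⟩
  rwa [← smul_left_injective ℝ hw (add_left_cancel hst)]

theorem left_mem_extremePoints_segment (e f : V) : e ∈ (segment ℝ e f).extremePoints ℝ := by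
  refine ⟨left_mem_segment ℝ e f, fun x hx y hy ⟨a, b, ha, hb, hab, he⟩ ↦ ?_⟩
  rw [segment_eq_image'] at hx hy
  obtain ⟨s, ⟨hs, -⟩, rfl⟩ := hx
  obtain ⟨t, ⟨ht, -⟩, rfl⟩ := hy
  obtain rfl : b = 1 - a := by linarith
  have hsum : (a * s + (1 - a) * t) • (f - e) = 0 := by
    linear_combination (norm := module) (1 : ℝ) • he
  rcases smul_eq_zero.1 hsum with h | h
  · have hs0 : s = 0 := by
      have := mul_nonneg ha.le hs
      have := mul_nonneg hb.le ht
      nlinarith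
    simp [hs0]
  · simp [h]

/-- The edge vectors of `P` at `e`: the differences `w` between the other end and `e`, over the
nondegenerate segments with end `e` that are faces of `P`. -/
def edgeVectors (P : Set V) (e : V) : Set V :=
  {w | w ≠ 0 ∧ IsExtreme ℝ P (segment ℝ e (e + w))}

theorem sub_mem_hull_edgeVectors (hP : Convex ℝ P) (hfin : (P.extremePoints ℝ).Finite)
    (hhull : convexHull ℝ (P.extremePoints ℝ) = P) (he : e ∈ P.extremePoints ℝ) {x : V}
    (hx : x ∈ P) : x - e ∈ PointedCone.hull ℝ (edgeVectors P e) := by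
  obtain ⟨N, hN_sub, hN_span, hN⟩ := exists_subset_span_eq_and_notMem_span_sdiff
    (R := {c : ℝ // 0 ≤ c}) (hfin.image (· - e))
  have hN_ext (w : V) (hw : w ∈ N) : e + w ∈ P.extremePoints ℝ := by
    obtain ⟨y, hy, rfl⟩ := hN_sub hw
    rwa [add_sub_cancel]
  have hN_feasible (w : V) (hw : w ∈ N) : ∃ r > (0 : ℝ), e + r • w ∈ P :=
    ⟨1, one_pos, by rw [one_smul]; exact (hN_ext w hw).1⟩
  have hP_hull (y : V) (hy : y ∈ P) : y - e ∈ PointedCone.hull ℝ N := by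
    have hconv : Convex ℝ ((· - e) ⁻¹' (PointedCone.hull ℝ N : Set V)) := by
      simpa only [sub_eq_add_neg] using (PointedCone.convex _).translate_preimage_left (-e)
    rw [← hhull] at hy
    refine convexHull_min (fun z hz ↦ ?_) hconv hy
    rw [Set.mem_preimage, SetLike.mem_coe, PointedCone.hull, hN_span]
    exact Submodule.subset_span (Set.mem_image_of_mem _ hz)
  have hsalient (g : V) (hg : g ∈ PointedCone.hull ℝ N) (hg_neg : -g ∈ PointedCone.hull ℝ N) :
      g = 0 := by
    obtain ⟨r, hr, hrg⟩ := exists_pos_add_smul_mem_of_mem_hull hP he.1 hN_feasible hg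
    obtain ⟨t, ht, htg⟩ := exists_pos_add_smul_mem_of_mem_hull hP he.1 hN_feasible hg_neg
    exact eq_zero_of_mem_extremePoints he hr ht hrg htg
  have hN_edges : N ⊆ edgeVectors P e := fun v hv ↦
    ⟨fun h0 ↦ hN v hv (h0 ▸ zero_mem _),
      isExtreme_segment_of_notMem_hull hP he.1 hP_hull hsalient hv (hN v hv) (hN_ext v hv)⟩
  exact Submodule.span_mono hN_edges (hP_hull x hx)

theorem mem_extremePoints_of_mem_edgeVectors {w : V} (hw : w ∈ edgeVectors P e) :
    e ∈ P.extremePoints ℝ :=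
  hw.2.extremePoints_subset_extremePoints (left_mem_extremePoints_segment e _)

theorem neg_mem_edgeVectors {w : V} (hw : w ∈ edgeVectors P e) : -w ∈ edgeVectors P (e + w) := by
  refine ⟨neg_ne_zero.2 hw.1, ?_⟩
  rw [add_neg_cancel_right, segment_symm]
  exact hw.2

theorem add_mem_extremePoints_of_mem_edgeVectors {w : V} (hw : w ∈ edgeVectors P e) :
    e + w ∈ P.extremePoints ℝ :=
  mem_extremePoints_of_mem_edgeVectors (neg_mem_edgeVectors hw)

end ConvexGeometry

section Edges

variable {E : Type*} [NormedAddCommGroup E] [NormedSpace ℝ E] {S : Finset E} {e w : E}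

theorem IsUnitPacking.half_smul_mem_halfBall (hS : IsUnitPacking (norm : E → ℝ) S) {s : E}
    (hs : s ∈ S) : (1 / 2 : ℝ) • s ∈ halfBall E := by
  rw [mem_closedBall_zero_iff, norm_smul, Real.norm_of_nonneg one_half_pos.le]
  linarith [hS.le_one s hs]

theorem IsUnitPacking.mem_face_of_sub_mem (hS : IsUnitPacking (norm : E → ℝ) S)
    {F : Set E} (hF : IsExtreme ℝ (halfBall E) F) {x s : E} (hx : x ∈ F) (hs : s ∈ S)
    (hxs : (3 : ℝ) • x - s ∈ halfBall E) : (1 / 2 : ℝ) • s ∈ F ∧ (3 : ℝ) • x - s ∈ F := by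
  have hx_mem : x ∈ openSegment ℝ ((1 / 2 : ℝ) • s) ((3 : ℝ) • x - s) :=
    ⟨2 / 3, 1 / 3, by norm_num, by norm_num, by norm_num, by module⟩
  have hs_half := hS.half_smul_mem_halfBall hs
  exact ⟨hF.left_mem_of_mem_openSegment hs_half hxs hx hx_mem,
    hF.right_mem_of_mem_openSegment hs_half hxs hx hx_mem⟩

theorem IsTightPacking.exists_mem_face (hS : IsTightPacking S) {F : Set E}
    (hF : IsExtreme ℝ (halfBall E) F) {x : E} (hx : x ∈ F) :
    ∃ s ∈ S, (1 / 2 : ℝ) • s ∈ F ∧ (3 : ℝ) • x - s ∈ F := by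
  obtain ⟨s, hs, hxs⟩ := hS.exists_sub_mem x (hF.subset hx)
  exact ⟨s, hs, hS.mem_face_of_sub_mem hF hx hs hxs⟩

theorem IsTightPacking.two_smul_mem (hS : IsTightPacking S)
    (he : e ∈ (halfBall E).extremePoints ℝ) : (2 : ℝ) • e ∈ S := by
  obtain ⟨s, hs, hse, -⟩ := hS.exists_mem_face (isExtreme_singleton.2 he) rfl
  rwa [← Set.mem_singleton_iff.1 hse, smul_smul, mul_one_div_cancel two_ne_zero, one_smul]

theorem IsTightPacking.finite_extremePoints (hS : IsTightPacking S) :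
    ((halfBall E).extremePoints ℝ).Finite :=
  S.finite_toSet.preimage (smul_right_injective E two_ne_zero).injOn |>.subset fun _ ↦
    hS.two_smul_mem

theorem IsTightPacking.exists_mem_edge (hS : IsTightPacking S)
    (hw : w ∈ edgeVectors (halfBall E) e) :
    ∃ t ∈ Set.Icc (1 / 4 : ℝ) (3 / 4), (2 : ℝ) • e + (2 * t) • w ∈ S := by
  have hmid : e + (1 / 2 : ℝ) • w ∈ segment ℝ e (e + w) :=
    (add_smul_mem_segment_iff hw.1).2 (by norm_num)
  obtain ⟨s, hs, hs_half, hs_sub⟩ := hS.exists_mem_face hw.2 hmid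
  rw [segment_eq_image', add_sub_cancel_left] at hs_half
  obtain ⟨t, -, ht⟩ := hs_half
  obtain rfl : s = (2 : ℝ) • e + (2 * t) • w := by
    linear_combination (norm := module) (-2 : ℝ) • ht
  rw [show (3 : ℝ) • (e + (1 / 2 : ℝ) • w) - ((2 : ℝ) • e + (2 * t) • w) =
    e + (3 / 2 - 2 * t) • w by module, add_smul_mem_segment_iff hw.1] at hs_sub
  exact ⟨t, ⟨by linarith [hs_sub.2], by linarith [hs_sub.1]⟩, hs⟩

theorem IsUnitPacking.one_le_abs_mul_norm (hS : IsUnitPacking (norm : E → ℝ) S) (hw : w ≠ 0)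
    {x : E} {a b : ℝ} (ha : x + a • w ∈ S) (hb : x + b • w ∈ S) (hab : a ≠ b) :
    1 ≤ |a - b| * ‖w‖ := by
  have hne : x + a • w ≠ x + b • w := fun h ↦ hab (smul_left_injective ℝ hw (add_left_cancel h))
  simpa only [add_sub_add_left_eq_sub, ← sub_smul, norm_smul, Real.norm_eq_abs] using
    hS.one_le_sub ha hb hne

theorem IsTightPacking.two_smul_add_smul_mem (hS : IsTightPacking S)
    (hw : w ∈ edgeVectors (halfBall E) e) :
    (2 : ℝ) • e + (0 : ℝ) • w ∈ S ∧ (2 : ℝ) • e + (2 : ℝ) • w ∈ S := by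
  have h0 := hS.two_smul_mem (mem_extremePoints_of_mem_edgeVectors hw)
  have h2 := hS.two_smul_mem (add_mem_extremePoints_of_mem_edgeVectors hw)
  exact ⟨by rwa [zero_smul, add_zero], by rwa [← smul_add]⟩

theorem IsTightPacking.norm_eq_one_of_mem_edgeVectors (hS : IsTightPacking S)
    (hw : w ∈ edgeVectors (halfBall E) e) : ‖w‖ = 1 := by
  obtain ⟨h0, h2⟩ := hS.two_smul_add_smul_mem hw
  obtain ⟨t, ht, hts⟩ := hS.exists_mem_edge hw
  have hleft := hS.one_le_abs_mul_norm hw.1 hts h0 (by linarith [ht.1])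
  have hright := hS.one_le_abs_mul_norm hw.1 h2 hts (by linarith [ht.2])
  rw [abs_of_nonneg (by linarith [ht.1])] at hleft
  rw [abs_of_nonneg (by linarith [ht.2])] at hright
  refine le_antisymm ?_ (by linarith)
  simpa using norm_sub_le_one_of_mem_halfBall
    (add_mem_extremePoints_of_mem_edgeVectors hw).1 (mem_extremePoints_of_mem_edgeVectors hw).1

theorem IsTightPacking.exists_eq_add_smul_of_half_smul_mem_edge (hS : IsTightPacking S)
    (hw : w ∈ edgeVectors (halfBall E) e) {s : E} (hs : s ∈ S)
    (hsw : (1 / 2 : ℝ) • s ∈ segment ℝ e (e + w)) :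
    ∃ k ∈ ({0, 1, 2} : Set ℝ), s = (2 : ℝ) • e + k • w := by
  obtain ⟨h0, h2⟩ := hS.two_smul_add_smul_mem hw
  have hnorm := hS.norm_eq_one_of_mem_edgeVectors hw
  have hsep {a b : ℝ} (ha : (2 : ℝ) • e + a • w ∈ S) (hb : (2 : ℝ) • e + b • w ∈ S)
      (hab : a ≠ b) : 1 ≤ |a - b| := by
    simpa [hnorm] using hS.one_le_abs_mul_norm hw.1 ha hb hab
  have heq_one {k : ℝ} (hk : (2 : ℝ) • e + k • w ∈ S) (hk_pos : 0 < k) (hk_lt : k < 2) : k = 1 := by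
    have hleft := hsep hk h0 hk_pos.ne'
    have hright := hsep h2 hk hk_lt.ne'
    rw [abs_of_nonneg (by linarith)] at hleft hright
    linarith
  rw [segment_eq_image', add_sub_cancel_left] at hsw
  obtain ⟨t, ht, hst⟩ := hsw
  obtain rfl : s = (2 : ℝ) • e + (2 * t) • w := by
    linear_combination (norm := module) (-2 : ℝ) • hst
  refine ⟨2 * t, ?_, rfl⟩
  rcases ht.1.eq_or_lt with rfl | h_pos
  · simp
  rcases ht.2.eq_or_lt with rfl | h_lt
  · simp
  · simp [heq_one hs (by linarith) (by linarith)]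

end Edges

section Prisms

variable {E : Type*} [NormedAddCommGroup E] [NormedSpace ℝ E] {S : Finset E} {e p u w : E}

theorem IsUnitPacking.exists_pos_forall_half_smul_mem (hS : IsUnitPacking (norm : E → ℝ) S)
    {F : Set E} (hF : IsExtreme ℝ (halfBall E) F) (hF_compact : IsCompact F) :
    ∃ δ > 0, ∀ x ∈ F, ∀ y, ‖y - x‖ < δ → ∀ s ∈ S, (3 : ℝ) • y - s ∈ halfBall E →
      (1 / 2 : ℝ) • s ∈ F := by
  set C : Set E := ⋃ s ∈ {s | s ∈ S ∧ (1 / 2 : ℝ) • s ∉ F}, (fun y ↦ (3 : ℝ) • y - s) ⁻¹' halfBall E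
  have hC : IsClosed C := (S.finite_toSet.subset fun _ hs ↦ hs.1).isClosed_biUnion fun s _ ↦
    isClosed_closedBall.preimage (by fun_prop)
  have hFC : F ⊆ Cᶜ := fun x hx hxC ↦ by
    obtain ⟨s, ⟨hs, hs_half⟩, hxs⟩ := Set.mem_iUnion₂.1 hxC
    exact hs_half (hS.mem_face_of_sub_mem hF hx hs hxs).1
  obtain ⟨δ, hδ, hδC⟩ := hF_compact.exists_thickening_subset_open hC.isOpen_compl hFC
  refine ⟨δ, hδ, fun x hx y hyx s hs hys ↦ ?_⟩
  by_contra hs_half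
  refine hδC (mem_thickening_iff.2 ⟨x, hx, ?_⟩) (Set.mem_biUnion ⟨hs, hs_half⟩ hys)
  rwa [dist_eq_norm]

theorem exists_isLeast_isGreatest_chord {q : E} (hq : q ∈ halfBall E) (hu : ‖u‖ = 1) :
    ∃ a ∈ Set.Icc (-1 : ℝ) 0, ∃ b, IsLeast {t : ℝ | q + t • u ∈ halfBall E} a ∧
      IsGreatest {t : ℝ | q + t • u ∈ halfBall E} b := by
  set C := {t : ℝ | q + t • u ∈ halfBall E}
  have h0 : (0 : ℝ) ∈ C := by simpa [C] using hq
  have hC_sub : C ⊆ Set.Icc (-1) 1 := fun t ht ↦ by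
    refine abs_le.1 ?_
    simpa [norm_smul, hu] using norm_sub_le_one_of_mem_halfBall ht hq
  have hC : IsCompact C :=
    isCompact_Icc.of_isClosed_subset (isClosed_closedBall.preimage (by fun_prop)) hC_sub
  obtain ⟨a, ha⟩ := hC.exists_isLeast ⟨0, h0⟩
  obtain ⟨b, hb⟩ := hC.exists_isGreatest ⟨0, h0⟩
  exact ⟨a, ⟨(hC_sub ha.1).1, ha.2 h0⟩, b, ha, hb⟩

theorem IsTightPacking.exists_pos_forall_add_sub_smul_mem (hS : IsTightPacking S)
    (hu : u ∈ edgeVectors (halfBall E) e) :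
    ∃ δ > 0, ∀ q, ‖q - e‖ < δ → ∀ t ∈ Set.Icc (0 : ℝ) 3,
      (1 / 3 : ℝ) • ((2 : ℝ) • e + q + t • u) ∈ halfBall E →
        ∃ k ∈ ({0, 1, 2} : Set ℝ), q + (t - k) • u ∈ halfBall E := by
  have hcompact : IsCompact (segment ℝ e (e + u)) := by
    rw [segment_eq_image']
    exact isCompact_Icc.image (by fun_prop)
  obtain ⟨δ, hδ, hface⟩ := hS.exists_pos_forall_half_smul_mem hu.2 hcompact
  refine ⟨δ, hδ, fun q hq t ht hy ↦ ?_⟩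
  obtain ⟨s, hs, hys⟩ := hS.exists_sub_mem _ hy
  have hx : e + (t / 3) • u ∈ segment ℝ e (e + u) :=
    (add_smul_mem_segment_iff hu.1).2 ⟨by linarith [ht.1], by linarith [ht.2]⟩
  have hyx : ‖(1 / 3 : ℝ) • ((2 : ℝ) • e + q + t • u) - (e + (t / 3) • u)‖ < δ := by
    rw [show (1 / 3 : ℝ) • ((2 : ℝ) • e + q + t • u) - (e + (t / 3) • u) = (1 / 3 : ℝ) • (q - e) by
      module, norm_smul, Real.norm_of_nonneg (by norm_num)]
    linarith [norm_nonneg (q - e)]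
  obtain ⟨k, hk, rfl⟩ := hS.exists_eq_add_smul_of_half_smul_mem_edge hu hs
    (hface _ hx _ hyx s hs hys)
  refine ⟨k, hk, ?_⟩
  convert! hys using 1
  module

/-- The tripled edge is dissected by the tiles centred at `2 • e`, `2 • e + u` and `2 • (e + u)`. If
the chord through `q` parallel to the edge were shorter than `u`, then for `q` close to `e` these
three tiles would leave a gap. -/
theorem IsTightPacking.exists_unit_chord (hS : IsTightPacking S)
    (hu : u ∈ edgeVectors (halfBall E) e) (hp : p ∈ halfBall E) :
    ∃ ε ∈ Set.Ioc (0 : ℝ) 1, ∃ a ∈ Set.Icc (-1 : ℝ) 0,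
      e + ε • (p - e) + a • u ∈ halfBall E ∧ e + ε • (p - e) + (a + 1) • u ∈ halfBall E := by
  have hconv : Convex ℝ (halfBall E) := convex_closedBall 0 _
  have he := (mem_extremePoints_of_mem_edgeVectors hu).1
  have heu := (add_mem_extremePoints_of_mem_edgeVectors hu).1
  obtain ⟨δ, hδ, htiles⟩ := hS.exists_pos_forall_add_sub_smul_mem hu
  obtain ⟨ε, hε, hε_lt⟩ := exists_between (lt_min one_pos hδ)
  obtain ⟨hε1, hεδ⟩ := lt_min_iff.1 hε_lt
  set q := e + ε • (p - e) with hq_def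
  have hqe : ‖q - e‖ < δ := by
    rw [hq_def, add_sub_cancel_left, norm_smul, Real.norm_of_nonneg hε.le]
    exact (mul_le_of_le_one_right hε.le (norm_sub_le_one_of_mem_halfBall hp he)).trans_lt hεδ
  have hq : q ∈ halfBall E := hconv.add_smul_mem he (by rwa [add_sub_cancel]) ⟨hε.le, hε1.le⟩
  obtain ⟨a, ha, b, ha_least, hb_greatest⟩ :=
    exists_isLeast_isGreatest_chord hq (hS.norm_eq_one_of_mem_edgeVectors hu)
  refine ⟨ε, ⟨hε, hε1.le⟩, a, ha, ha_least.1, ?_⟩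
  by_contra ha1
  have hb : b < a + 1 := by
    by_contra! hab
    exact ha1 (add_smul_mem_of_le hconv hq hb_greatest.1 (by linarith [ha.1]) hab)
  have hb0 : 0 ≤ b := hb_greatest.2 (by simpa using hq)
  obtain ⟨t, hbt, hta⟩ := exists_between hb
  have hy : (1 / 3 : ℝ) • ((2 : ℝ) • e + q + t • u) ∈ halfBall E :=
    third_smul_two_smul_add_add_smul_mem hconv he heu ha_least.1
      ⟨by linarith [ha.2], by linarith⟩
  obtain ⟨k, hk, hkt⟩ := htiles q hqe t ⟨by linarith, by linarith [ha.2]⟩ hy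
  have hka : a ≤ t - k := ha_least.2 hkt
  have hkb : t - k ≤ b := hb_greatest.2 hkt
  rcases hk with rfl | rfl | rfl <;> linarith

theorem IsTightPacking.exists_pos_add_add_smul_mem (hS : IsTightPacking S)
    (hu : u ∈ edgeVectors (halfBall E) e) (hw : e + w ∈ halfBall E)
    (hbound : ∀ ε ∈ Set.Ioc (0 : ℝ) 1, ∀ a < (0 : ℝ), e + ε • w + a • u ∉ halfBall E) :
    ∃ ε > (0 : ℝ), e + u + ε • w ∈ halfBall E := by
  obtain ⟨ε, hε, a, ha, ha_mem, ha1_mem⟩ := hS.exists_unit_chord hu hw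
  rw [add_sub_cancel_left] at ha_mem ha1_mem
  obtain rfl : a = 0 := ha.2.antisymm (not_lt.1 fun h ↦ hbound ε hε a h ha_mem)
  rw [zero_add, one_smul, add_right_comm] at ha1_mem
  exact ⟨ε, hε.1, ha1_mem⟩

theorem IsTightPacking.exists_pos_add_add_smul_mem_of_edges (hS : IsTightPacking S)
    (hu : u ∈ edgeVectors (halfBall E) e) (hw : w ∈ edgeVectors (halfBall E) e) (huw : u ≠ w) :
    ∃ ε > (0 : ℝ), e + u + ε • w ∈ halfBall E := by
  refine hS.exists_pos_add_add_smul_mem hu (add_mem_extremePoints_of_mem_edgeVectors hw).1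
    fun ε hε a ha hmem ↦ ?_
  have hz : e + (ε / (1 - a)) • w ∈ segment ℝ e (e + w) :=
    (add_smul_mem_segment_iff hw.1).2 ⟨div_nonneg hε.1.le (by linarith),
      div_le_one_of_le₀ (by linarith [hε.2]) (by linarith)⟩
  have hz_mem : e + (ε / (1 - a)) • w ∈ openSegment ℝ (e + u) (e + ε • w + a • u) := by
    have : 0 < 1 - a := by linarith
    refine ⟨-a / (1 - a), 1 / (1 - a), div_pos (by linarith) this, by positivity, ?_, ?_⟩
    · field_simp; ring
    · match_scalars <;> field_simp <;> ring
  have hu_seg := hw.2.left_mem_of_mem_openSegment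
    (add_mem_extremePoints_of_mem_edgeVectors hu).1 hmem hz hz_mem
  rw [segment_eq_image', add_sub_cancel_left] at hu_seg
  obtain ⟨k, hk, hku⟩ := hu_seg
  obtain rfl : k • w = u := add_left_cancel hku
  have hk1 := hS.norm_eq_one_of_mem_edgeVectors hu
  rw [norm_smul, hS.norm_eq_one_of_mem_edgeVectors hw, mul_one, Real.norm_of_nonneg hk.1] at hk1
  exact huw (by rw [hk1, one_smul])

/-- In a relation `u = p - q` between edge vectors, `q` can be followed inside the half ball from
`e`, and `p` from `e + u`. The two end points would differ by a multiple of `u` longer than one. -/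
theorem IsTightPacking.notMem_span_edgeVectors_sdiff (hS : IsTightPacking S)
    (hu : u ∈ edgeVectors (halfBall E) e) :
    u ∉ Submodule.span ℝ (edgeVectors (halfBall E) e \ {u}) := by
  intro hspan
  have hconv : Convex ℝ (halfBall E) := convex_closedBall 0 _
  have he := (mem_extremePoints_of_mem_edgeVectors hu).1
  have heu := (add_mem_extremePoints_of_mem_edgeVectors hu).1
  obtain ⟨p, hp, q, hq, hpq⟩ := exists_mem_hull_sub_eq_of_mem_span hspan
  obtain ⟨r, hr, hrq⟩ := exists_pos_add_smul_mem_of_mem_hull hconv he (fun w hw ↦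
    ⟨1, one_pos, by
      rw [one_smul]; exact (add_mem_extremePoints_of_mem_edgeVectors hw.1).1⟩) hq
  obtain ⟨t, ht, htp⟩ := exists_pos_add_smul_mem_of_mem_hull hconv heu (fun w hw ↦
    hS.exists_pos_add_add_smul_mem_of_edges hu hw.1 (Ne.symm hw.2)) hp
  have hm : 0 < min r t := lt_min hr ht
  have hdiff := norm_sub_le_one_of_mem_halfBall
    (add_smul_mem_of_le hconv heu htp hm.le (min_le_right r t))
    (add_smul_mem_of_le hconv he hrq hm.le (min_le_left r t))
  rw [show e + u + min r t • p - (e + min r t • q) = (1 + min r t) • u by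
      rw [← hpq]; module, norm_smul, Real.norm_of_nonneg (by positivity),
    hS.norm_eq_one_of_mem_edgeVectors hu] at hdiff
  linarith

end Prisms

section Corner

variable {E : Type*} [NormedAddCommGroup E] [NormedSpace ℝ E] {S : Finset E} {e : E}

theorem convexHull_extremePoints_of_finite {P : Set E} (hP : Convex ℝ P) (hP_compact : IsCompact P)
    (hfin : (P.extremePoints ℝ).Finite) : convexHull ℝ (P.extremePoints ℝ) = P := by
  rw [← (hfin.isCompact_convexHull (𝕜 := ℝ)).isClosed.closure_eq,
    closure_convexHull_extremePoints hP_compact hP]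

theorem IsTightPacking.sub_mem_hull_edgeVectors [FiniteDimensional ℝ E] (hS : IsTightPacking S)
    (he : e ∈ (halfBall E).extremePoints ℝ) {x : E} (hx : x ∈ halfBall E) :
    x - e ∈ PointedCone.hull ℝ (edgeVectors (halfBall E) e) :=
  _root_.sub_mem_hull_edgeVectors (convex_closedBall 0 _) hS.finite_extremePoints
    (convexHull_extremePoints_of_finite (convex_closedBall 0 _) (isCompact_closedBall 0 _)
      hS.finite_extremePoints) he hx

theorem IsTightPacking.span_edgeVectors [FiniteDimensional ℝ E] (hS : IsTightPacking S)
    (he : e ∈ (halfBall E).extremePoints ℝ) :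
    Submodule.span ℝ (edgeVectors (halfBall E) e) = ⊤ := by
  have hsub {x : E} (hx : x ∈ halfBall E) : x - e ∈ Submodule.span ℝ (edgeVectors (halfBall E) e) :=
    PointedCone.hull_le_span ℝ _ (hS.sub_mem_hull_edgeVectors he hx)
  have hhalf : halfBall E ⊆ Submodule.span ℝ (edgeVectors (halfBall E) e) := fun x hx ↦ by
    simpa using sub_mem (hsub hx) (hsub (mem_closedBall_self one_half_pos.le))
  exact Submodule.eq_top_of_nonempty_interior' _
    ⟨0, interior_mono hhalf (ball_subset_interior_closedBall (mem_ball_self one_half_pos))⟩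

theorem IsTightPacking.exists_edge_basis [FiniteDimensional ℝ E] (hS : IsTightPacking S) :
    ∃ e ∈ halfBall E, ∃ b : Basis (Fin (finrank ℝ E)) ℝ E,
      (∀ i, b i ∈ edgeVectors (halfBall E) e) ∧
        ∀ x ∈ halfBall E, x - e ∈ PointedCone.hull ℝ (Set.range b) := by
  obtain ⟨e, he⟩ := (isCompact_closedBall (0 : E) (1 / 2)).extremePoints_nonempty
    ⟨0, mem_closedBall_self one_half_pos.le⟩
  have hli : LinearIndependent ℝ ((↑) : edgeVectors (halfBall E) e → E) :=
    linearIndependent_iff_notMem_span.2 fun ⟨v, hv⟩ ↦ by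
      rw [← Set.compl_eq_univ_sdiff, Set.image_val_compl, Set.image_singleton]
      exact hS.notMem_span_edgeVectors_sdiff hv
  let B := Basis.mk hli (by rw [Subtype.range_coe, hS.span_edgeVectors he])
  have : Fintype (edgeVectors (halfBall E) e) := FiniteDimensional.fintypeBasisIndex B
  let b := B.reindex (Fintype.equivFinOfCardEq (finrank_eq_card_basis B).symm)
  have hb : Set.range b = edgeVectors (halfBall E) e := by
    simp [b, B]
  exact ⟨e, he.1, b, fun i ↦ hb ▸ Set.mem_range_self i, fun x hx ↦
    hb ▸ hS.sub_mem_hull_edgeVectors he hx⟩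

theorem repr_sub_le_one_of_edge_basis {ι : Type*} [Finite ι] {b : Basis ι ℝ E}
    (hb : ∀ i, e + b i ∈ halfBall E) (hb_norm : ∀ i, ‖b i‖ = 1) (he : e ∈ halfBall E)
    (hhull : ∀ x ∈ halfBall E, x - e ∈ PointedCone.hull ℝ (Set.range b)) {x : E}
    (hx : x ∈ halfBall E) (i : ι) : b.repr (x - e) i ≤ 1 := by
  cases nonempty_fintype ι
  have hconv : Convex ℝ (halfBall E) := convex_closedBall 0 _
  set c := b.repr (x - e)
  have hc (j : ι) : 0 ≤ c j := repr_nonneg_of_mem_hull_range b (hhull x hx) j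
  set y := ∑ j ∈ Finset.univ.erase i, c j • b j
  have hxy : x = e + y + c i • b i := by
    rw [add_assoc, Finset.sum_erase_add _ _ (Finset.mem_univ i), b.sum_repr, add_sub_cancel]
  have hy : y ∈ PointedCone.hull ℝ (Set.range b) := sum_mem fun j _ ↦
    PointedCone.smul_mem _ (hc j) (PointedCone.subset_hull (Set.mem_range_self j))
  obtain ⟨r, hr, hry⟩ := exists_pos_add_smul_mem_of_mem_hull hconv he
    (Set.forall_mem_range.2 fun j ↦ ⟨1, one_pos, by simpa using hb j⟩) hy
  set ε := min r 1
  have hε : 0 < ε := lt_min hr one_pos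
  have hε_mem : e + ε • y ∈ halfBall E := add_smul_mem_of_le hconv he hry hε.le (min_le_left r 1)
  have hmix := hconv (hb i) hx (sub_nonneg.2 (min_le_right r 1)) hε.le (sub_add_cancel 1 ε)
  have hdiff := norm_sub_le_one_of_mem_halfBall hmix hε_mem
  rw [show (1 - ε) • (e + b i) + ε • x - (e + ε • y) = (1 - ε + ε * c i) • b i by
      rw [hxy]; module, norm_smul, hb_norm, mul_one] at hdiff
  exact le_of_mul_le_mul_left (by linarith [(le_abs_self _).trans hdiff]) hε

end Corner

section Box

theorem add_sum_smul_mem_of_forall_subset {V ι : Type*} [AddCommGroup V] [Module ℝ V] {P : Set V}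
    (hP : Convex ℝ P) {v : ι → V} {c : ι → ℝ} (hc : ∀ i, c i ∈ Set.Icc (0 : ℝ) 1) (J : Finset ι)
    {q : V} (hq : ∀ I ⊆ J, q + ∑ i ∈ I, v i ∈ P) : q + ∑ i ∈ J, c i • v i ∈ P := by
  induction J using Finset.induction_on generalizing q with
  | empty => simpa using hq ∅ subset_rfl
  | insert j J hj ih =>
    have hleft : q + ∑ i ∈ J, c i • v i ∈ P := ih fun I hI ↦ hq I (hI.trans (J.subset_insert j))
    have hright : q + ∑ i ∈ J, c i • v i + v j ∈ P := by
      rw [add_right_comm]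
      refine ih fun I hI ↦ ?_
      have := hq (insert j I) (Finset.insert_subset_insert j hI)
      rwa [Finset.sum_insert fun h ↦ hj (hI h), ← add_assoc] at this
    rw [Finset.sum_insert hj, add_comm (c j • v j), ← add_assoc]
    exact hP.add_smul_mem hleft hright (hc j)

variable {E ι : Type*} [NormedAddCommGroup E] [NormedSpace ℝ E] {S : Finset E} {b : Basis ι ℝ E}
  {e : E}

theorem mem_edgeVectors_of_repr_eq_zero_or_one
    (hbox : ∀ x ∈ halfBall E, ∀ i, b.repr (x - e) i ∈ Set.Icc (0 : ℝ) 1)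
    {v : E} (hv : v ∈ halfBall E) {j : ι}
    (hv_repr : ∀ i ≠ j, b.repr (v - e) i = 0 ∨ b.repr (v - e) i = 1) (hvj : b.repr (v - e) j = 0)
    {l : ℝ} (hl_pos : 0 < l) (hl : IsGreatest {t : ℝ | v + t • b j ∈ halfBall E} l) :
    l • b j ∈ edgeVectors (halfBall E) v := by
  refine ⟨smul_ne_zero hl_pos.ne' (b.ne_zero j),
    (convex_closedBall 0 _).segment_subset hv hl.1, fun x hx y hy z hz hzxy ↦ ?_⟩
  rw [segment_eq_image', add_sub_cancel_left] at hz ⊢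
  obtain ⟨t, -, rfl⟩ := hz
  set a := b.repr (x - e) j
  have hx_eq : x = v + a • b j := by
    rw [← sub_left_inj (a := e)]
    refine b.ext_elem fun i ↦ ?_
    rcases eq_or_ne i j with rfl | hij
    · rw [add_sub_right_comm, map_add, Finsupp.add_apply, hvj]
      simp [a, -map_sub]
    · have hvi : b.repr (v + a • b j - e) i = b.repr (v - e) i := by
        simp [add_sub_right_comm, hij]
      have hvi_ext : b.repr (v - e) i ∈ (Set.Icc (0 : ℝ) 1).extremePoints ℝ := by
        rw [Set.extremePoints_Icc zero_le_one]
        exact hv_repr i hij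
      rw [hvi]
      refine hvi_ext.2 (hbox x hx i) (hbox y hy i) ?_
      obtain ⟨α, β, hα, hβ, hαβ, hxy⟩ := hzxy
      refine ⟨α, β, hα, hβ, hαβ, ?_⟩
      have he : α • (x - e) + β • (y - e) = v - e + t • l • b j := by
        linear_combination (norm := module) hxy - hαβ • e
      simpa [hij, -map_sub] using congr(b.repr $he i)
  refine ⟨a / l, ⟨div_nonneg (hbox x hx j).1 hl_pos.le, div_le_one_of_le₀ (hl.2 ?_) hl_pos.le⟩, ?_⟩
  · change v + a • b j ∈ halfBall E
    rwa [← hx_eq]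
  · simp only [smul_smul, div_mul_cancel₀ a hl_pos.ne', ← hx_eq]

theorem IsTightPacking.mem_edgeVectors_of_add_smul_mem (hS : IsTightPacking S)
    (hb : ∀ i, ‖b i‖ = 1)
    (hbox : ∀ x ∈ halfBall E, ∀ i, b.repr (x - e) i ∈ Set.Icc (0 : ℝ) 1)
    {v : E} (hv : v ∈ halfBall E) {j : ι}
    (hv_repr : ∀ i ≠ j, b.repr (v - e) i = 0 ∨ b.repr (v - e) i = 1) (hvj : b.repr (v - e) j = 0)
    {r : ℝ} (hr : 0 < r) (hrv : v + r • b j ∈ halfBall E) : b j ∈ edgeVectors (halfBall E) v := by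
  obtain ⟨-, -, l, -, hl⟩ := exists_isLeast_isGreatest_chord hv (hb j)
  have hl_pos : 0 < l := hr.trans_le (hl.2 hrv)
  have hl_edge := mem_edgeVectors_of_repr_eq_zero_or_one hbox hv hv_repr hvj hl_pos hl
  have hl_norm := hS.norm_eq_one_of_mem_edgeVectors hl_edge
  rw [norm_smul, hb, mul_one, Real.norm_of_nonneg hl_pos.le] at hl_norm
  rwa [hl_norm, one_smul] at hl_edge

theorem IsTightPacking.add_add_mem_of_repr (hS : IsTightPacking S) (hb : ∀ i, ‖b i‖ = 1)
    (hbox : ∀ x ∈ halfBall E, ∀ i, b.repr (x - e) i ∈ Set.Icc (0 : ℝ) 1)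
    {v : E} (hv : v ∈ halfBall E) (hv_repr : ∀ i, b.repr (v - e) i = 0 ∨ b.repr (v - e) i = 1)
    {i j : ι} (hij : i ≠ j) (hvi : b.repr (v - e) i = 0) (hvj : b.repr (v - e) j = 0)
    (hi : v + b i ∈ halfBall E) (hj : v + b j ∈ halfBall E) : v + b i + b j ∈ halfBall E := by
  have hi_edge : b i ∈ edgeVectors (halfBall E) v :=
    hS.mem_edgeVectors_of_add_smul_mem hb hbox hv (fun k _ ↦ hv_repr k) hvi one_pos
      (by rwa [one_smul])
  obtain ⟨ε, hε, hε_mem⟩ := hS.exists_pos_add_add_smul_mem hi_edge hj fun ε _ a ha hmem ↦ by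
    have hnonneg := (hbox _ hmem i).1
    have hcoord : b.repr (ε • b j + a • b i) i = a := by simp [hij.symm]
    rw [add_assoc, add_sub_right_comm, map_add, Finsupp.add_apply, hvi, hcoord] at hnonneg
    linarith
  have hvi_repr (k : ι) : b.repr (v + b i - e) k = b.repr (v - e) k + if i = k then 1 else 0 := by
    rw [add_sub_right_comm, map_add, Finsupp.add_apply, b.repr_self, Finsupp.single_apply]
  refine (hS.mem_edgeVectors_of_add_smul_mem hb hbox hi (fun k _ ↦ ?_) ?_ hε hε_mem).2.1
    (right_mem_segment ℝ _ _)
  · rw [hvi_repr]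
    rcases eq_or_ne i k with rfl | hik
    · rw [hvi, zero_add, if_pos rfl]; exact Or.inr rfl
    · rw [if_neg hik, add_zero]; exact hv_repr k
  · rw [hvi_repr, hvj, if_neg hij, add_zero]

theorem IsTightPacking.add_sum_mem (hS : IsTightPacking S) (hb : ∀ i, ‖b i‖ = 1)
    (hbox : ∀ x ∈ halfBall E, ∀ i, b.repr (x - e) i ∈ Set.Icc (0 : ℝ) 1)
    (he : e ∈ halfBall E) (he_add : ∀ i, e + b i ∈ halfBall E) (I : Finset ι) :
    e + ∑ i ∈ I, b i ∈ halfBall E := by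
  have hrepr (I : Finset ι) (k : ι) :
      b.repr (e + ∑ i ∈ I, b i - e) k = if k ∈ I then 1 else 0 := by
    simp [add_sub_cancel_left, Finsupp.single_apply, -map_sub]
  suffices e + ∑ i ∈ I, b i ∈ halfBall E ∧ ∀ j ∉ I, e + ∑ i ∈ I, b i + b j ∈ halfBall E from this.1
  induction I using Finset.induction_on with
  | empty => simpa only [Finset.sum_empty, add_zero] using ⟨he, fun j _ ↦ he_add j⟩
  | insert i I hi ih =>
    rw [Finset.sum_insert hi, add_comm (b i), ← add_assoc]
    refine ⟨ih.2 i hi, fun j hj ↦ ?_⟩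
    obtain ⟨hji, hj⟩ := not_or.1 (Finset.mem_insert.not.1 hj)
    refine hS.add_add_mem_of_repr hb hbox ih.1 (fun k ↦ ?_) (Ne.symm hji) ?_ ?_
      (ih.2 i hi) (ih.2 j hj)
    · rw [hrepr]
      exact (ite_eq_or_eq _ _ _).symm
    · rw [hrepr, if_neg hi]
    · rw [hrepr, if_neg hj]

end Box

section Conclusion

variable {E : Type*} [NormedAddCommGroup E] [NormedSpace ℝ E] {S : Finset E}

theorem repr_eq_neg_half_of_mem_halfBall_iff {ι : Type*} [Finite ι] {b : Basis ι ℝ E} {e : E}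
    (h : ∀ x, x ∈ halfBall E ↔ ∀ i, b.repr (x - e) i ∈ Set.Icc (0 : ℝ) 1) (i : ι) :
    b.repr e i = -(1 / 2) := by
  cases nonempty_fintype ι
  have hneg {x : E} (hx : x ∈ halfBall E) : -x ∈ halfBall E := by
    rwa [mem_closedBall_zero_iff, norm_neg, ← mem_closedBall_zero_iff]
  have hleft := ((h _).1 (hneg ((h e).2 (by simp))) i).2
  have hright := ((h _).1 (hneg ((h (e + ∑ j, b j)).2 (by simp [Finsupp.single_apply]))) i).1
  simp only [map_sub, map_neg, map_add, map_sum, Finsupp.sub_apply, Finsupp.neg_apply,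
    Finsupp.add_apply, Finsupp.finsetSum_apply, Basis.repr_self, Finsupp.single_apply,
    Finset.sum_ite_eq', Finset.mem_univ, if_true] at hleft hright
  linarith

theorem IsTightPacking.exists_basis_norm_le_one_iff [FiniteDimensional ℝ E]
    (hS : IsTightPacking S) :
    ∃ b : Basis (Fin (finrank ℝ E)) ℝ E, ∀ x, ‖x‖ ≤ 1 ↔ ∀ i, |b.repr x i| ≤ 1 := by
  obtain ⟨e, he, b, hb, hhull⟩ := hS.exists_edge_basis
  have hb_norm (i) : ‖b i‖ = 1 := hS.norm_eq_one_of_mem_edgeVectors (hb i)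
  have he_add (i) : e + b i ∈ halfBall E := (hb i).2.1 (right_mem_segment ℝ _ _)
  have hbox (x : E) (hx : x ∈ halfBall E) (i) : b.repr (x - e) i ∈ Set.Icc (0 : ℝ) 1 :=
    ⟨repr_nonneg_of_mem_hull_range b (hhull x hx) i,
      repr_sub_le_one_of_edge_basis he_add hb_norm he hhull hx i⟩
  have hbox_iff (x : E) : x ∈ halfBall E ↔ ∀ i, b.repr (x - e) i ∈ Set.Icc (0 : ℝ) 1 := by
    refine ⟨hbox x, fun h ↦ ?_⟩
    have := add_sum_smul_mem_of_forall_subset (convex_closedBall 0 _) h Finset.univ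
      fun I _ ↦ hS.add_sum_mem hb_norm hbox he he_add I
    rwa [b.sum_repr, add_sub_cancel] at this
  refine ⟨b, fun x ↦ ?_⟩
  have hx : ‖x‖ ≤ 1 ↔ (1 / 2 : ℝ) • x ∈ halfBall E := by
    rw [mem_closedBall_zero_iff, norm_smul, Real.norm_of_nonneg one_half_pos.le]
    exact (mul_le_iff_le_one_right one_half_pos).symm
  rw [hx, hbox_iff]
  refine forall_congr' fun i ↦ ?_
  rw [map_sub, Finsupp.sub_apply, repr_eq_neg_half_of_mem_halfBall_iff hbox_iff, map_smul,
    Finsupp.smul_apply, smul_eq_mul, abs_le, Set.mem_Icc]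
  constructor <;> rintro ⟨h₁, h₂⟩ <;> constructor <;> linarith

end Conclusion

section Seminorm

variable {V : Type*} [AddCommGroup V] [Module ℝ V] {p : Seminorm ℝ V} {S : Finset V}

theorem IsUnitPacking.card_le_and_exists_basis [FiniteDimensional ℝ V] {n : ℕ}
    (hn : finrank ℝ V = n) (hp : ∀ x, p x = 0 → x = 0) (hS : IsUnitPacking p S) :
    S.card ≤ 3 ^ n ∧
      (S.card = 3 ^ n → ∃ b : Basis (Fin n) ℝ V, ∀ x, p x ≤ 1 ↔ ∀ i, |b.repr x i| ≤ 1) := by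
  subst hn
  let : Norm V := ⟨p⟩
  have core : NormedSpace.Core ℝ V :=
    { norm_nonneg := apply_nonneg p
      norm_smul := map_smul_eq_mul p
      norm_triangle := map_add_le_add p
      norm_eq_zero_iff x := ⟨hp x, fun h ↦ h ▸ map_zero p⟩ }
  let : NormedAddCommGroup V := .ofCore core
  let : NormedSpace ℝ V := .ofCore core
  exact ⟨hS.card_le, fun hcard ↦ (hS.isTightPacking hcard).exists_basis_norm_le_one_iff⟩

theorem abs_repr_le_of_le_one_iff {ι : Type*} {b : Basis ι ℝ V}
    (hb : ∀ x, p x ≤ 1 ↔ ∀ i, |b.repr x i| ≤ 1) (x : V) (i : ι) : |b.repr x i| ≤ p x := by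
  refine le_of_forall_gt_imp_ge_of_dense fun r hr ↦ ?_
  have hr_pos : 0 < r := (apply_nonneg p x).trans_lt hr
  have hscaled : p (r⁻¹ • x) ≤ 1 := by
    rw [map_smul_eq_mul, norm_inv, Real.norm_of_nonneg hr_pos.le]
    exact inv_mul_le_one_of_le₀ hr.le hr_pos.le
  have hcoord := (hb _).1 hscaled i
  rwa [map_smul, Finsupp.smul_apply, smul_eq_mul, abs_mul, abs_inv, abs_of_pos hr_pos,
    inv_mul_le_one₀ hr_pos] at hcoord

theorem exists_isUnitPacking_card_eq {ι : Type*} [Fintype ι] {b : Basis ι ℝ V}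
    (hb : ∀ x, p x ≤ 1 ↔ ∀ i, |b.repr x i| ≤ 1) :
    ∃ S : Finset V, 0 ∈ S ∧ S.card = 3 ^ Fintype.card ι ∧ IsUnitPacking p S := by
  let f (z : ι → ℤ) : V := ∑ i, (z i : ℝ) • b i
  have hf_repr (z : ι → ℤ) (i : ι) : b.repr (f z) i = z i := by
    simp only [f, b.repr_sum_self]
  have hf_inj : f.Injective := fun z w h ↦ funext fun i ↦ by
    have := congr(b.repr $h i)
    rwa [hf_repr, hf_repr, Int.cast_inj] at this
  refine ⟨(Fintype.piFinset fun _ ↦ Finset.Icc (-1) 1).image f, ?_, ?_, ?_, ?_⟩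
  · exact Finset.mem_image.2 ⟨0, by simp, by simp [f]⟩
  · rw [Finset.card_image_of_injective _ hf_inj, Fintype.card_piFinset, Finset.prod_const,
      Int.card_Icc, Finset.card_univ]
    rfl
  · simp only [Finset.forall_mem_image, Fintype.mem_piFinset, Finset.mem_Icc]
    refine fun z hz ↦ (hb _).2 fun i ↦ ?_
    rw [hf_repr]
    exact_mod_cast abs_le.2 (hz i)
  · rw [Finset.coe_image]
    rintro _ ⟨z, -, rfl⟩ _ ⟨w, -, rfl⟩ hzw
    obtain ⟨i, hi⟩ := Function.ne_iff.1 (ne_of_apply_ne f hzw)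
    refine le_trans ?_ (abs_repr_le_of_le_one_iff hb _ i)
    rw [map_sub, Finsupp.sub_apply, hf_repr, hf_repr]
    exact_mod_cast Int.one_le_abs (sub_ne_zero.2 hi)

theorem exists_isUnitPacking_card_eq_add_one_iff {m : ℕ} :
    (∃ S : Finset V, 0 ∈ S ∧ S.card = m + 1 ∧ IsUnitPacking p S) ↔
      ∃ c : Fin m → V, (∀ i, 1 ≤ p (c i) ∧ p (c i) ≤ 1) ∧ ∀ i j, i ≠ j → 1 ≤ p (c i - c j) := by
  constructor
  · rintro ⟨S, h0, hcard, hS⟩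
    have hcard_erase : (S.erase 0).card = m := by rw [Finset.card_erase_of_mem h0, hcard]; rfl
    let c := (S.erase 0).equivFinOfCardEq hcard_erase |>.symm
    have hc (i) : (c i : V) ≠ 0 ∧ (c i : V) ∈ S := Finset.mem_erase.1 (c i).2
    refine ⟨fun i ↦ c i, fun i ↦ ⟨?_, hS.le_one _ (hc i).2⟩, fun i j hij ↦
      hS.one_le_sub (hc i).2 (hc j).2 fun h ↦ hij (c.injective (Subtype.ext h))⟩
    simpa only [sub_zero] using hS.one_le_sub (hc i).2 h0 (hc i).1
  · rintro ⟨c, hc, hc_sub⟩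
    have hne {x : V} (hx : 1 ≤ p x) : x ≠ 0 := by
      rintro rfl
      rw [map_zero] at hx
      exact one_pos.not_ge hx
    have hinj : c.Injective := fun i j hij ↦ by
      by_contra h
      exact hne (hc_sub i j h) (sub_eq_zero.2 hij)
    refine ⟨insert 0 (Finset.univ.image c), Finset.mem_insert_self _ _, ?_, ?_, ?_⟩
    · rw [Finset.card_insert_of_notMem, Finset.card_image_of_injective _ hinj, Finset.card_fin]
      simpa using fun i ↦ hne (hc i).1
    · simpa using fun i ↦ (hc i).2
    · have : Std.Symm fun x y ↦ 1 ≤ p (x - y) := ⟨fun x y h ↦ by rwa [map_sub_rev]⟩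
      rw [Finset.coe_insert, Finset.coe_image, Finset.coe_univ, Set.image_univ,
        Set.pairwise_insert_of_symm]
      refine ⟨?_, Set.forall_mem_range.2 fun i _ ↦ ?_⟩
      · rintro _ ⟨i, rfl⟩ _ ⟨j, rfl⟩ hij
        exact hc_sub i j (ne_of_apply_ne c hij)
      · rw [zero_sub, map_neg_eq_map]
        exact (hc i).1

end Seminorm

section DifferenceBody

variable {E : Type*} [NormedAddCommGroup E] {K : Set E}

theorem vadd_inter_self_nonempty_iff {G : Type*} [AddGroup G] {A : Set G} {s : G} :
    ((s +ᵥ A) ∩ A).Nonempty ↔ s ∈ A - A := by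
  simp only [Set.vadd_inter_nonempty_iff', Set.mem_sub, and_assoc, exists_and_left]

theorem sub_self_mem_nhds_zero (hKint : (interior K).Nonempty) : K - K ∈ nhds 0 := by
  obtain ⟨x, hx⟩ := hKint
  refine Filter.mem_of_superset (isOpen_interior.sub_left.mem_nhds ?_)
    (Set.sub_subset_sub interior_subset interior_subset)
  exact ⟨x, hx, x, hx, sub_self x⟩

variable [NormedSpace ℝ E]

theorem interior_sub_self (hK : Convex ℝ K) (hKint : (interior K).Nonempty) :
    interior (K - K) = interior K - interior K := by
  have hopen : IsOpen (interior K - interior K) := isOpen_interior.sub_left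
  refine Set.Subset.antisymm ?_ (interior_maximal (Set.sub_subset_sub interior_subset
    interior_subset) hopen)
  have hconv : Convex ℝ (interior K - interior K) := hK.interior.sub hK.interior
  rw [← hopen.interior_eq, ← hconv.interior_closure_eq_interior_of_nonempty_interior
    (by rw [hopen.interior_eq]; exact hKint.sub hKint)]
  refine interior_mono (Set.sub_subset_iff.2 fun x hx y hy ↦ ?_)
  have hdense {x : E} (hx : x ∈ K) : x ∈ closure (interior K) :=
    hK.closure_interior_eq_closure_of_nonempty_interior hKint ▸ subset_closure hx
  exact map_mem_closure₂ continuous_sub (hdense hx) (hdense hy) fun _ ha _ hb ↦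
    Set.sub_mem_sub ha hb

/-- The seminorm whose unit ball is the closure of the difference body `K - K`. -/
def differenceSeminorm (hK : Convex ℝ K) (hKint : (interior K).Nonempty) : Seminorm ℝ E :=
  gaugeSeminorm (s := K - K)
    ((balanced_iff_neg_mem (hK.sub hK)).2 fun x ↦ by rw [← Set.mem_neg, neg_sub]; exact id)
    (hK.sub hK) (absorbent_nhds_zero (sub_self_mem_nhds_zero hKint))

theorem differenceSeminorm_le_one_iff (hK : Convex ℝ K) (hKcomp : IsCompact K)
    (hKint : (interior K).Nonempty) {x : E} :
    differenceSeminorm hK hKint x ≤ 1 ↔ x ∈ K - K := by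
  have hclosed : IsClosed (K - K) := by
    rw [sub_eq_add_neg]
    exact (hKcomp.add hKcomp.neg).isClosed
  have := gauge_le_one_iff_mem_closure (x := x) (hK.sub hK) (sub_self_mem_nhds_zero hKint)
  rwa [hclosed.closure_eq] at this

theorem eq_zero_of_differenceSeminorm_eq_zero (hK : Convex ℝ K) (hKcomp : IsCompact K)
    (hKint : (interior K).Nonempty) {x : E} (hx : differenceSeminorm hK hKint x = 0) : x = 0 := by
  refine (gauge_eq_zero (absorbent_nhds_zero (sub_self_mem_nhds_zero hKint)) ?_).1 hx
  rw [NormedSpace.isVonNBounded_iff]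
  exact hKcomp.isBounded.sub hKcomp.isBounded

theorem disjoint_interior_vadd_iff (hK : Convex ℝ K) (hKint : (interior K).Nonempty) {s t : E} :
    Disjoint (interior (s +ᵥ K)) (interior (t +ᵥ K)) ↔ 1 ≤ differenceSeminorm hK hKint (s - t) := by
  rw [interior_vadd, interior_vadd, Set.disjoint_vadd_set_right, vadd_vadd, neg_add_eq_sub,
    Set.disjoint_iff_inter_eq_empty, ← Set.not_nonempty_iff_eq_empty, vadd_inter_self_nonempty_iff,
    ← interior_sub_self hK hKint,
    ← gauge_lt_one_iff_mem_interior (hK.sub hK) (sub_self_mem_nhds_zero hKint), not_lt]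
  rfl

theorem hasHadwigerConfig_iff {d m : ℕ} {K : Set (EuclideanSpace ℝ (Fin d))} (hK : Convex ℝ K)
    (hKcomp : IsCompact K) (hKint : (interior K).Nonempty) :
    HasHadwigerConfig K m ↔ ∃ S : Finset (EuclideanSpace ℝ (Fin d)),
      0 ∈ S ∧ S.card = m + 1 ∧ IsUnitPacking (differenceSeminorm hK hKint) S := by
  have hdisj (s : EuclideanSpace ℝ (Fin d)) := disjoint_interior_vadd_iff hK hKint (s := s) (t := 0)
  have htouch (s : EuclideanSpace ℝ (Fin d)) :
      ((s +ᵥ K) ∩ K).Nonempty ↔ differenceSeminorm hK hKint s ≤ 1 := by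
    rw [differenceSeminorm_le_one_iff hK hKcomp hKint, vadd_inter_self_nonempty_iff]
  simp only [zero_vadd, sub_zero] at hdisj
  simp only [exists_isUnitPacking_card_eq_add_one_iff, HasHadwigerConfig, hdisj, htouch,
    disjoint_interior_vadd_iff hK hKint]

end DifferenceBody

section Cube

variable {V ι : Type*} [AddCommGroup V] [Module ℝ V] {b : Basis ι ℝ V} {K : Set V}

theorem exists_sub_eq_of_mem_sub_self_iff [Finite ι]
    (h : ∀ x, x ∈ K - K ↔ ∀ i, |b.repr x i| ≤ 1) (I : Finset ι) :
    ∃ k ∈ K, ∃ l ∈ K, ∀ i, b.repr k i - b.repr l i = if i ∈ I then 1 else -1 := by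
  cases nonempty_fintype ι
  obtain ⟨k, hk, l, hl, hkl⟩ := (h (∑ i, (if i ∈ I then (1 : ℝ) else -1) • b i)).2 fun i ↦ by
    rw [b.repr_sum_self]
    split_ifs <;> simp
  refine ⟨k, hk, l, hl, fun i ↦ ?_⟩
  rw [← Finsupp.sub_apply, ← map_sub]
  simp only [hkl, b.repr_sum_self]

variable [Fintype ι]

theorem mem_vadd_parallelepiped_iff {q x : V} :
    x ∈ q +ᵥ parallelepiped b ↔ ∀ i, b.repr (x - q) i ∈ Set.Icc (0 : ℝ) 1 := by
  rw [Set.mem_vadd_set_iff_neg_vadd_mem, parallelepiped_basis_eq, vadd_eq_add, neg_add_eq_sub]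
  rfl

theorem mem_parallelepiped_sub_self_iff {x : V} :
    x ∈ parallelepiped b - parallelepiped b ↔ ∀ i, |b.repr x i| ≤ 1 := by
  simp only [parallelepiped_basis_eq]
  constructor
  · rintro ⟨y, hy, z, hz, rfl⟩ i
    rw [map_sub, Finsupp.sub_apply]
    exact abs_sub_le_iff.2 ⟨by linarith [(hy i).2, (hz i).1], by linarith [(hy i).1, (hz i).2]⟩
  · refine fun hx ↦ ⟨∑ i, ((1 + b.repr x i) / 2) • b i, fun i ↦ ?_,
      ∑ i, ((1 - b.repr x i) / 2) • b i, fun i ↦ ?_, b.ext_elem fun i ↦ ?_⟩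
    · rw [b.repr_sum_self]
      constructor <;> linarith [abs_le.1 (hx i)]
    · rw [b.repr_sum_self]
      constructor <;> linarith [abs_le.1 (hx i)]
    · rw [map_sub, Finsupp.sub_apply, b.repr_sum_self, b.repr_sum_self]
      ring

theorem exists_eq_vadd_parallelepiped_of_mem_sub_self_iff (hK : Convex ℝ K)
    (h : ∀ x, x ∈ K - K ↔ ∀ i, |b.repr x i| ≤ 1) : ∃ q : V, K = q +ᵥ parallelepiped b := by
  have hwidth {x y : V} (hx : x ∈ K) (hy : y ∈ K) (i : ι) : b.repr x i - b.repr y i ≤ 1 := by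
    simpa using (abs_le.1 ((h _).1 (Set.sub_mem_sub hx hy) i)).2
  obtain ⟨p, hp, q, hq, hpq⟩ := exists_sub_eq_of_mem_sub_self_iff h Finset.univ
  simp only [Finset.mem_univ, if_true] at hpq
  have hvertex (I : Finset ι) : q + ∑ i ∈ I, b i ∈ K := by
    obtain ⟨k, hk, l, hl, hkl⟩ := exists_sub_eq_of_mem_sub_self_iff h I
    suffices k = q + ∑ i ∈ I, b i from this ▸ hk
    refine b.ext_elem fun i ↦ ?_
    have hcoord : b.repr (q + ∑ i ∈ I, b i) i = b.repr q i + if i ∈ I then 1 else 0 := by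
      simp [Finsupp.single_apply]
    have hi := hkl i
    have := hwidth hk hq i
    have := hwidth hp hk i
    have := hwidth hl hq i
    have := hwidth hp hl i
    have := hpq i
    rw [hcoord]
    split_ifs at hi ⊢ <;> linarith
  refine ⟨q, Set.ext fun x ↦ ?_⟩
  rw [mem_vadd_parallelepiped_iff]
  refine ⟨fun hx i ↦ ?_, fun hx ↦ ?_⟩
  · rw [map_sub, Finsupp.sub_apply]
    exact ⟨by linarith [hwidth hp hx i, hpq i], hwidth hx hq i⟩
  · have := add_sum_smul_mem_of_forall_subset hK hx Finset.univ fun I _ ↦ hvertex I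
    rwa [b.sum_repr, add_sub_cancel] at this

theorem exists_eq_vadd_parallelepiped_iff (hK : Convex ℝ K) :
    (∃ q : V, K = q +ᵥ parallelepiped b) ↔ ∀ x, x ∈ K - K ↔ ∀ i, |b.repr x i| ≤ 1 := by
  refine ⟨?_, exists_eq_vadd_parallelepiped_of_mem_sub_self_iff hK⟩
  rintro ⟨q, rfl⟩ x
  rw [Set.vadd_sub_vadd_comm, sub_self, zero_vadd, mem_parallelepiped_sub_self_iff]

theorem image_unitCube_eq_vadd_parallelepiped {d : ℕ} {b : Basis (Fin d) ℝ V} {q : V}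
    {f : EuclideanSpace ℝ (Fin d) ≃ᵃ[ℝ] V} (hf : ∀ y i, b.repr (f y - q) i = y i) :
    f '' {y | ∀ i, y i ∈ Set.Icc (0 : ℝ) 1} = q +ᵥ parallelepiped b := by
  refine Set.ext (f.surjective.forall.2 fun y ↦ ?_)
  rw [f.injective.mem_set_image, mem_vadd_parallelepiped_iff]
  simp only [hf]
  rfl

theorem isAffineCube_iff {d : ℕ} {K : Set (EuclideanSpace ℝ (Fin d))} :
    IsAffineCube K ↔ ∃ (b : Basis (Fin d) ℝ (EuclideanSpace ℝ (Fin d)))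
      (q : EuclideanSpace ℝ (Fin d)), K = q +ᵥ parallelepiped b := by
  constructor
  · rintro ⟨f, rfl⟩
    refine ⟨(EuclideanSpace.basisFun (Fin d) ℝ).toBasis.map f.linear, f 0,
      image_unitCube_eq_vadd_parallelepiped fun y i ↦ ?_⟩
    have : f y - f 0 = f.linear y := by simpa using (f.toAffineMap.linearMap_vsub y 0).symm
    simp [this]
  · rintro ⟨b, q, rfl⟩
    refine ⟨((WithLp.linearEquiv 2 ℝ (Fin d → ℝ)).trans b.equivFun.symm).toAffineEquiv.trans
      (AffineEquiv.constVAdd ℝ _ q), (image_unitCube_eq_vadd_parallelepiped fun y i ↦ ?_).symm⟩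
    simp [-map_sub, Basis.equivFun_symm_apply, -map_sum, b.repr_sum_self]

end Cube

/-- Hadwiger's theorem: the Hadwiger number of any convex body `K ⊆ ℝ^d` is at most
`3^d - 1`, with equality if and only if `K` is an affine `d`-cube. -/
theorem hadwiger_number_bound (d : ℕ) (hd : 1 ≤ d)
    (K : Set (EuclideanSpace ℝ (Fin d))) (hKconv : Convex ℝ K) (hKcomp : IsCompact K)
    (hKint : (interior K).Nonempty) :
    (∀ m : ℕ, HasHadwigerConfig K m → m ≤ 3 ^ d - 1) ∧
      (HasHadwigerConfig K (3 ^ d - 1) ↔ IsAffineCube K) := by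
  have hsub (x) : differenceSeminorm hKconv hKint x ≤ 1 ↔ x ∈ K - K :=
    differenceSeminorm_le_one_iff hKconv hKcomp hKint
  have hpacking {S} (hS : IsUnitPacking (differenceSeminorm hKconv hKint) S) :=
    hS.card_le_and_exists_basis finrank_euclideanSpace_fin
      fun _ ↦ eq_zero_of_differenceSeminorm_eq_zero hKconv hKcomp hKint
  simp only [hasHadwigerConfig_iff hKconv hKcomp hKint,
    Nat.sub_add_cancel (Nat.one_le_pow d 3 three_pos)]
  refine ⟨fun m ⟨S, _, hcard, hS⟩ ↦ Nat.le_sub_one_of_lt (hcard.ge.trans (hpacking hS).1), ?_⟩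
  rw [isAffineCube_iff]
  simp_rw [exists_eq_vadd_parallelepiped_iff hKconv, ← hsub]
  exact ⟨fun ⟨S, _, hcard, hS⟩ ↦ (hpacking hS).2 hcard, fun ⟨b, hb⟩ ↦ by
    simpa only [Fintype.card_fin] using exists_isUnitPacking_card_eq hb⟩
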